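/- arXiv:0810.2113 — 2 statements merged into one kernel-verified Lean document; each statement's English description precedes it below -/
import Mathlib

section
/- For real x ≥ 2, ∑_{n ≤ x} d(n)/√n ≤ 2·√x·log x − 1.691·√x + 2·log x + 5.846. -/
/-!
Put `F n = ∑ k ≤ n, 1 / √k`, `N = ⌊√x⌋` and let `H N` be the harmonic number. Since `d(n) / √n` is
the Dirichlet convolution of `1 / √n` with itself, the hyperbola method writes the sum as
`2 ∑ a ≤ N, F ⌊x / a⌋ / √a - F N ^ 2`. Comparison with the trapezoidal rule gives a constant `c`
(in fact `ζ(1/2)`) with `2 √n + c ≤ F n ≤ 2 √n + c + 1 / (2 √n)`. Substituting the upper bound and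
completing the square, the linear terms in `c` cancel:
`4 √x * H N + N / √x - (F N - c) ^ 2 + c ^ 2`, where `(F N - c) ^ 2 ≥ 4 N`. The estimate
`H N ≤ log N + γ + 1 / (2 N)` turns this into `4 √x * log N + 4 γ √x - 4 N + O(1)`, and passing
from `N` to `√x` costs only `O(1)` because `t ↦ √x * log t - t` is stationary at `t = √x`.
-/

open Filter Finset Real
open scoped Topology

section Hyperbola

variable {R : Type*}

lemma sum_filter_mul_le_fst_le [AddCommMonoid R] (F : ℕ → ℕ → R) (A N : ℕ) :
    ∑ p ∈ Ioc 0 N ×ˢ Ioc 0 N with p.1 * p.2 ≤ N ∧ p.1 ≤ A, F p.1 p.2 =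
      ∑ a ∈ Ioc 0 A, ∑ b ∈ Ioc 0 (N / a), F a b := by
  refine sum_finset_product' _ _ _ fun ⟨a, b⟩ ↦ ?_
  simp only [mem_filter, mem_product, mem_Ioc]
  constructor
  · rintro ⟨⟨⟨ha, -⟩, hb, -⟩, hab, haA⟩
    exact ⟨⟨ha, haA⟩, hb, (Nat.le_div_iff_mul_le ha).2 (by rwa [mul_comm])⟩
  · rintro ⟨⟨ha, haA⟩, hb, hbN⟩
    have hab : a * b ≤ N := by rwa [Nat.le_div_iff_mul_le ha, mul_comm] at hbN
    exact ⟨⟨⟨ha, (Nat.le_mul_of_pos_right a hb).trans hab⟩, hb,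
      (Nat.le_mul_of_pos_left b ha).trans hab⟩, hab, haA⟩

lemma sum_filter_mul_le_snd_le [AddCommMonoid R] (F : ℕ → ℕ → R) (B N : ℕ) :
    ∑ p ∈ Ioc 0 N ×ˢ Ioc 0 N with p.1 * p.2 ≤ N ∧ p.2 ≤ B, F p.1 p.2 =
      ∑ b ∈ Ioc 0 B, ∑ a ∈ Ioc 0 (N / b), F a b := by
  rw [← sum_filter_mul_le_fst_le fun b a ↦ F a b]
  exact sum_equiv (Equiv.prodComm ℕ ℕ) (by simp [mul_comm, and_comm]) (by simp)

theorem sum_Ioc_mul_eq_hyperbola [Ring R] (f g : ArithmeticFunction R) {A B N : ℕ}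
    (hAB : A * B ≤ N) (hN : N < (A + 1) * (B + 1)) :
    ∑ n ∈ Ioc 0 N, (f * g) n =
      ∑ a ∈ Ioc 0 A, f a * ∑ b ∈ Ioc 0 (N / a), g b
        + ∑ b ∈ Ioc 0 B, (∑ a ∈ Ioc 0 (N / b), f a) * g b
        - (∑ a ∈ Ioc 0 A, f a) * ∑ b ∈ Ioc 0 B, g b := by
  set P := {p ∈ Ioc 0 N ×ˢ Ioc 0 N | p.1 * p.2 ≤ N} with hP
  have hunion : {p ∈ P | p.1 ≤ A} ∪ {p ∈ P | p.2 ≤ B} = P := by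
    rw [← filter_or, filter_eq_self]
    intro p hp
    by_contra! hlt
    exact hN.not_ge ((Nat.mul_le_mul hlt.1 hlt.2).trans (mem_filter.1 hp).2)
  have hinter : {p ∈ P | p.1 ≤ A} ∩ {p ∈ P | p.2 ≤ B} = Ioc 0 A ×ˢ Ioc 0 B := by
    ext ⟨a, b⟩
    simp only [hP, mem_inter, mem_filter, mem_product, mem_Ioc]
    constructor
    · tauto
    · rintro ⟨⟨ha, haA⟩, hb, hbB⟩
      have hab : a * b ≤ N := (Nat.mul_le_mul haA hbB).trans hAB
      have haN := (Nat.le_mul_of_pos_right a hb).trans hab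
      have hbN := (Nat.le_mul_of_pos_left b ha).trans hab
      tauto
  have hsum := sum_union_inter (s₁ := {p ∈ P | p.1 ≤ A}) (s₂ := {p ∈ P | p.2 ≤ B})
    (f := fun p ↦ f p.1 * g p.2)
  rw [hunion, hinter, hP, filter_filter, filter_filter,
    sum_filter_mul_le_fst_le fun a b ↦ f a * g b, sum_filter_mul_le_snd_le fun a b ↦ f a * g b,
    sum_product, ← sum_mul_sum] at hsum
  rw [ArithmeticFunction.sum_Ioc_mul_eq_sum_prod_filter, eq_sub_iff_add_eq, hsum]
  simp only [mul_sum, sum_mul]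

end Hyperbola

section Harmonic

lemma log_add_one_sub_log_le {a : ℝ} (ha : 0 < a) :
    log (a + 1) - log a ≤ 1 / (2 * a) + 1 / (2 * (a + 1)) := by
  have hsinh : log ((a + 1) / a) ≤ sinh (log ((a + 1) / a)) :=
    self_le_sinh_iff.2 (log_nonneg (by rw [le_div_iff₀ ha]; linarith))
  rw [sinh_log (by positivity), log_div (by positivity) ha.ne'] at hsinh
  refine hsinh.trans_eq ?_
  field_simp
  ring

lemma le_log_add_one_sub_log {a : ℝ} (ha : 0 < a) :
    1 / (2 * a) + 1 / (2 * (a + 1)) - (1 / (12 * a ^ 2) - 1 / (12 * (a + 1) ^ 2)) ≤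
      log (a + 1) - log a := by
  have hartanh : 2 / (2 * a + 1) + 2 / (3 * (2 * a + 1) ^ 3) ≤ log (1 + a⁻¹) := by
    refine le_trans (le_of_eq ?_)
      (sum_le_hasSum (range 2) (fun i _ ↦ by positivity) (hasSum_log_one_add_inv ha))
    simp only [sum_range_succ, sum_range_zero]
    norm_num
    field_simp
  have hdiff : 2 / (2 * a + 1) + 2 / (3 * (2 * a + 1) ^ 3)
      - (1 / (2 * a) + 1 / (2 * (a + 1)) - (1 / (12 * a ^ 2) - 1 / (12 * (a + 1) ^ 2)))
      = (2 * a ^ 2 + 2 * a + 1) / (12 * a ^ 2 * (a + 1) ^ 2 * (2 * a + 1) ^ 3) := by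
    field_simp
    ring
  have hpos : 0 ≤ (2 * a ^ 2 + 2 * a + 1) / (12 * a ^ 2 * (a + 1) ^ 2 * (2 * a + 1) ^ 3) := by
    positivity
  have hlog : log (1 + a⁻¹) = log (a + 1) - log a := by
    rw [← log_div (by positivity) ha.ne', add_div, div_self ha.ne', one_div]
  linarith

lemma cast_harmonic_succ (n : ℕ) :
    (harmonic (n + 1) : ℝ) = harmonic n + 2 * (1 / (2 * ((n : ℝ) + 1))) := by
  rw [harmonic_succ]
  push_cast
  field_simp

lemma tendsto_one_div_mul_natCast_pow {a : ℝ} (ha : 0 < a) {k : ℕ} (hk : k ≠ 0) :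
    Tendsto (fun n : ℕ ↦ 1 / (a * (n : ℝ) ^ k)) atTop (𝓝 0) := by
  simp only [one_div]
  exact tendsto_inv_atTop_zero.comp
    (((tendsto_pow_atTop hk).comp tendsto_natCast_atTop_atTop).const_mul_atTop ha)

lemma harmonic_le_log_add_eulerMascheroniConstant {n : ℕ} (hn : 1 ≤ n) :
    (harmonic n : ℝ) ≤ log n + eulerMascheroniConstant + 1 / (2 * n) := by
  have hmono : Monotone fun m : ℕ ↦
      (harmonic (m + 1) : ℝ) - log ↑(m + 1) - 1 / (2 * ↑(m + 1)) := by
    refine monotone_add_nat_of_le_succ (f := fun m ↦ (harmonic m : ℝ) - log m - 1 / (2 * m))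
      fun m hm ↦ ?_
    have hlog := log_add_one_sub_log_le (a := m) (by exact_mod_cast hm)
    simp only [cast_harmonic_succ, Nat.cast_add, Nat.cast_one]
    linarith
  have hlim : Tendsto (fun m : ℕ ↦ (harmonic m : ℝ) - log m - 1 / (2 * m)) atTop
      (𝓝 eulerMascheroniConstant) := by
    simpa using tendsto_harmonic_sub_log.sub (tendsto_one_div_mul_natCast_pow two_pos one_ne_zero)
  have hle := hmono.ge_of_tendsto ((tendsto_add_atTop_iff_nat 1).2 hlim) (n - 1)
  simp only [Nat.sub_add_cancel hn] at hle
  linarith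

lemma eulerMascheroniConstant_le_harmonic_sub_log {n : ℕ} (hn : 1 ≤ n) :
    eulerMascheroniConstant ≤ harmonic n - log n - 1 / (2 * n) + 1 / (12 * n ^ 2) := by
  have hanti : Antitone fun m : ℕ ↦
      (harmonic (m + 1) : ℝ) - log ↑(m + 1) - 1 / (2 * ↑(m + 1)) + 1 / (12 * ↑(m + 1) ^ 2) := by
    refine antitone_add_nat_of_succ_le
      (f := fun m ↦ (harmonic m : ℝ) - log m - 1 / (2 * m) + 1 / (12 * m ^ 2)) fun m hm ↦ ?_
    have hlog := le_log_add_one_sub_log (a := m) (by exact_mod_cast hm)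
    simp only [cast_harmonic_succ, Nat.cast_add, Nat.cast_one]
    linarith
  have hlim : Tendsto
      (fun m : ℕ ↦ (harmonic m : ℝ) - log m - 1 / (2 * m) + 1 / (12 * m ^ 2)) atTop
      (𝓝 eulerMascheroniConstant) := by
    simpa using (tendsto_harmonic_sub_log.sub
      (tendsto_one_div_mul_natCast_pow two_pos one_ne_zero)).add
      (tendsto_one_div_mul_natCast_pow (a := 12) (by norm_num) two_ne_zero)
  have hle := hanti.le_of_tendsto ((tendsto_add_atTop_iff_nat 1).2 hlim) (n - 1)
  simpa only [Nat.sub_add_cancel hn] using hle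

lemma eulerMascheroniConstant_lt_d5 : eulerMascheroniConstant < 0.57725 := by
  have hle := eulerMascheroniConstant_le_harmonic_sub_log (n := 4) (by norm_num)
  have hharmonic : harmonic 4 = 25 / 12 := by norm_num [harmonic, sum_range_succ]
  have hlog : log (4 : ℕ) = 2 * log 2 := by
    rw [show ((4 : ℕ) : ℝ) = 2 ^ 2 by norm_num, log_pow, Nat.cast_two]
  rw [hharmonic, hlog] at hle
  norm_num at hle ⊢
  linarith [log_two_gt_d9]

end Harmonic

section InvSqrt

/-- The arithmetic function `n ↦ 1 / √n`, whose Dirichlet square is `n ↦ d(n) / √n`.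
Its value at `0` is `0`, as `ArithmeticFunction` requires, thanks to `1 / 0 = 0`. -/
noncomputable def invSqrt : ArithmeticFunction ℝ := ⟨fun n ↦ 1 / √n, by simp⟩

/-- The summatory function of `invSqrt`. -/
noncomputable def sumInvSqrt (n : ℕ) : ℝ := ∑ k ∈ Ioc 0 n, invSqrt k

lemma invSqrt_apply (n : ℕ) : invSqrt n = 1 / √n := rfl

lemma invSqrt_mul_invSqrt_apply (n : ℕ) : (invSqrt * invSqrt) n = #n.divisors / √n := by
  have hterm : ∀ p ∈ n.divisorsAntidiagonal, invSqrt p.1 * invSqrt p.2 = 1 / √n := by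
    intro p hp
    rw [invSqrt_apply, invSqrt_apply, div_mul_div_comm, one_mul, ← sqrt_mul p.1.cast_nonneg,
      ← Nat.cast_mul, (Nat.mem_divisorsAntidiagonal.1 hp).1]
  rw [ArithmeticFunction.mul_apply, sum_congr rfl hterm, sum_const, nsmul_eq_mul, mul_one_div,
    ← Nat.map_div_right_divisors, card_map]

lemma sumInvSqrt_succ (n : ℕ) : sumInvSqrt (n + 1) = sumInvSqrt n + 1 / √((n : ℝ) + 1) := by
  rw [sumInvSqrt, sum_Ioc_succ_top n.zero_le, invSqrt_apply, Nat.cast_succ, sumInvSqrt]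

lemma one_div_sqrt_add_one_le {a : ℝ} (ha : 0 ≤ a) :
    1 / √(a + 1) ≤ 2 * √(a + 1) - 2 * √a := by
  have hpos : 0 < √(a + 1) := by positivity
  rw [div_le_iff₀ hpos]
  nlinarith [sq_nonneg (√(a + 1) - √a), sq_sqrt ha, sq_sqrt (show 0 ≤ a + 1 by linarith)]

lemma two_mul_sqrt_add_one_sub_le {a : ℝ} (ha : 0 < a) :
    2 * √(a + 1) - 2 * √a ≤ 1 / (2 * √a) + 1 / (2 * √(a + 1)) := by
  have hle : √a ≤ √(a + 1) := sqrt_le_sqrt (by linarith)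
  have hs : 0 < √a := sqrt_pos.2 ha
  have ht : 0 < √(a + 1) := by positivity
  have hsq : √(a + 1) ^ 2 - √a ^ 2 = 1 := by
    rw [sq_sqrt ha.le, sq_sqrt (by linarith), add_sub_cancel_left]
  generalize √(a + 1) = t at *
  generalize √a = s at *
  have hdiff : 1 / (2 * s) + 1 / (2 * t) - (2 * t - 2 * s) = (t - s) ^ 3 / (2 * s * t) := by
    rw [← hsq]
    field_simp
    ring
  have hnonneg : 0 ≤ (t - s) ^ 3 / (2 * s * t) := by
    have := sub_nonneg.2 hle
    positivity
  linarith

lemma exists_sumInvSqrt_bounds : ∃ c ∈ Set.Icc (-(3 / 2) : ℝ) (-1), ∀ n : ℕ, 1 ≤ n →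
    2 * √n + c ≤ sumInvSqrt n ∧ sumInvSqrt n ≤ 2 * √n + c + 1 / (2 * √n) := by
  set lower : ℕ → ℝ := fun n ↦ sumInvSqrt n - 2 * √n - 1 / (2 * √n) with hlower
  set upper : ℕ → ℝ := fun n ↦ sumInvSqrt n - 2 * √n with hupper
  have hmono : Monotone fun n ↦ lower (n + 1) := by
    refine monotone_add_nat_of_le_succ fun n hn ↦ ?_
    have htrapezoid := two_mul_sqrt_add_one_sub_le (a := n) (by exact_mod_cast hn)
    have hhalf : 1 / √((n : ℝ) + 1) = 2 * (1 / (2 * √((n : ℝ) + 1))) := by field_simp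
    simp only [hlower, sumInvSqrt_succ, Nat.cast_add, Nat.cast_one, hhalf]
    linarith
  have hanti : Antitone fun n ↦ upper (n + 1) := by
    refine antitone_add_nat_of_succ_le fun n _ ↦ ?_
    have hstep := one_div_sqrt_add_one_le (a := n) n.cast_nonneg
    simp only [hupper, sumInvSqrt_succ, Nat.cast_add, Nat.cast_one]
    linarith
  have hle : (fun n ↦ lower (n + 1)) ≤ fun n ↦ upper (n + 1) :=
    fun n ↦ sub_le_self _ (by positivity)
  obtain ⟨c, hc⟩ : ∃ c, ∀ n, 1 ≤ n → c ∈ Set.Icc (lower n) (upper n) := by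
    refine ⟨⨆ n, lower (n + 1), fun n hn ↦ ?_⟩
    have hmem := Set.mem_iInter.1 (hmono.ciSup_mem_iInter_Icc_of_antitone hanti hle) (n - 1)
    simpa only [Nat.sub_add_cancel hn] using hmem
  have hone : sumInvSqrt 1 = 1 := by simp [sumInvSqrt, invSqrt_apply]
  refine ⟨c, ?_, fun n hn ↦ ?_⟩
  · have h := hc 1 le_rfl
    simp only [hlower, hupper, hone, Nat.cast_one, sqrt_one, Set.mem_Icc] at h
    constructor <;> linarith
  · have h := hc n hn
    simp only [hlower, hupper, Set.mem_Icc] at h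
    constructor <;> linarith

end InvSqrt

lemma monotoneOn_two_mul_add_one_div :
    MonotoneOn (fun s : ℝ ↦ 2 * s + 1 / (2 * s)) (Set.Ici (1 / 2)) := by
  intro s hs t ht hst
  simp only [Set.mem_Ici] at hs ht ⊢
  have hdiff : 2 * t + 1 / (2 * t) - (2 * s + 1 / (2 * s)) =
      (t - s) * (4 * s * t - 1) / (2 * s * t) := by
    have hs₀ : s ≠ 0 := by linarith
    have ht₀ : t ≠ 0 := by linarith
    field_simp
    ring
  have hnonneg : 0 ≤ (t - s) * (4 * s * t - 1) / (2 * s * t) :=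
    div_nonneg (mul_nonneg (by linarith) (by nlinarith)) (by nlinarith)
  linarith

lemma sumInvSqrt_floor_le {c : ℝ}
    (hc : ∀ n : ℕ, 1 ≤ n → sumInvSqrt n ≤ 2 * √n + c + 1 / (2 * √n)) {y : ℝ} (hy : 1 ≤ y) :
    sumInvSqrt ⌊y⌋₊ ≤ 2 * √y + c + 1 / (2 * √y) := by
  have hfloor : 1 ≤ ⌊y⌋₊ := Nat.floor_pos.2 hy
  have hsqrt : 1 ≤ √(⌊y⌋₊ : ℝ) := one_le_sqrt.2 (by exact_mod_cast hfloor)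
  have hle : √(⌊y⌋₊ : ℝ) ≤ √y := sqrt_le_sqrt (Nat.floor_le (zero_le_one.trans hy))
  have hmono : 2 * √(⌊y⌋₊ : ℝ) + 1 / (2 * √(⌊y⌋₊ : ℝ)) ≤ 2 * √y + 1 / (2 * √y) :=
    monotoneOn_two_mul_add_one_div (Set.mem_Ici.2 (by linarith)) (Set.mem_Ici.2 (by linarith)) hle
  linarith [hc _ hfloor]

lemma sum_invSqrt_mul_sumInvSqrt_le {c : ℝ}
    (hc : ∀ n : ℕ, 1 ≤ n → sumInvSqrt n ≤ 2 * √n + c + 1 / (2 * √n)) {x : ℝ} {N : ℕ}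
    (hN : (N : ℝ) ≤ x) :
    ∑ a ∈ Ioc 0 N, invSqrt a * sumInvSqrt (⌊x⌋₊ / a) ≤
      2 * √x * harmonic N + N / (2 * √x) + c * sumInvSqrt N := by
  have hterm : ∀ a ∈ Ioc 0 N, invSqrt a * sumInvSqrt (⌊x⌋₊ / a) ≤
      2 * √x * (a : ℝ)⁻¹ + 1 / (2 * √x) + c * invSqrt a := by
    intro a ha
    obtain ⟨ha₀, haN⟩ := mem_Ioc.1 ha
    have ha_pos : (0 : ℝ) < a := by exact_mod_cast ha₀
    have hax : (a : ℝ) ≤ x := le_trans (by exact_mod_cast haN) hN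
    have hx : 0 < x := ha_pos.trans_le hax
    have hfloor := sumInvSqrt_floor_le hc ((one_le_div ha_pos).2 hax)
    rw [Nat.floor_div_natCast, sqrt_div hx.le] at hfloor
    have hsqrt : (a : ℝ) = √a ^ 2 := (sq_sqrt ha_pos.le).symm
    calc invSqrt a * sumInvSqrt (⌊x⌋₊ / a)
        ≤ 1 / √a * (2 * (√x / √a) + c + 1 / (2 * (√x / √a))) := by
          rw [invSqrt_apply]
          gcongr
      _ = 2 * √x * (√a ^ 2)⁻¹ + 1 / (2 * √x) + c * (1 / √a) := by
          have := sqrt_pos.2 ha_pos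
          have := sqrt_pos.2 hx
          field_simp
          ring
      _ = 2 * √x * (a : ℝ)⁻¹ + 1 / (2 * √x) + c * invSqrt a := by rw [← hsqrt, invSqrt_apply]
  refine (sum_le_sum hterm).trans_eq ?_
  rw [sum_add_distrib, sum_add_distrib, ← mul_sum, ← mul_sum, sum_const, Nat.card_Ioc,
    Nat.sub_zero, nsmul_eq_mul, mul_one_div, harmonic_eq_sum_Icc, sumInvSqrt]
  push_cast
  rfl

lemma sum_card_divisors_div_sqrt_eq {M N : ℕ} (hNM : N * N ≤ M) (hMN : M < (N + 1) * (N + 1)) :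
    ∑ n ∈ Icc 1 M, (#n.divisors : ℝ) / √n =
      2 * ∑ a ∈ Ioc 0 N, invSqrt a * sumInvSqrt (M / a) - sumInvSqrt N ^ 2 := by
  have hhyperbola := sum_Ioc_mul_eq_hyperbola invSqrt invSqrt hNM hMN
  simp only [invSqrt_mul_invSqrt_apply, mul_comm (Finset.sum _ _) (invSqrt _)] at hhyperbola
  rw [two_mul, sq]
  exact hhyperbola

lemma sum_card_divisors_div_sqrt_le_harmonic {x : ℝ} {N : ℕ} (hN : 1 ≤ N)
    (hNx : N * N ≤ ⌊x⌋₊) (hxN : ⌊x⌋₊ < (N + 1) * (N + 1)) :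
    ∑ n ∈ Icc 1 ⌊x⌋₊, (#n.divisors : ℝ) / √n ≤
      4 * √x * harmonic N + N / √x - 4 * N + 9 / 4 := by
  obtain ⟨c, ⟨hc_ge, hc_le⟩, hc⟩ := exists_sumInvSqrt_bounds
  have hNx' : (N : ℝ) ≤ x := (Nat.le_floor_iff' (by omega)).1 ((Nat.le_mul_self N).trans hNx)
  have hsum := sum_invSqrt_mul_sumInvSqrt_le (fun n hn ↦ (hc n hn).2) hNx'
  have hsq : 4 * (N : ℝ) ≤ (sumInvSqrt N - c) ^ 2 :=
    calc 4 * (N : ℝ) = (2 * √N) ^ 2 := by rw [mul_pow, sq_sqrt N.cast_nonneg]; norm_num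
      _ ≤ (sumInvSqrt N - c) ^ 2 := by gcongr; linarith [(hc N hN).1]
  have hc_sq : c ^ 2 ≤ 9 / 4 := by nlinarith
  rw [sum_card_divisors_div_sqrt_eq hNx hxN]
  calc 2 * ∑ a ∈ Ioc 0 N, invSqrt a * sumInvSqrt (⌊x⌋₊ / a) - sumInvSqrt N ^ 2
      ≤ 2 * (2 * √x * harmonic N + N / (2 * √x) + c * sumInvSqrt N) - sumInvSqrt N ^ 2 := by
        gcongr
    _ = 4 * √x * harmonic N + N / √x - (sumInvSqrt N - c) ^ 2 + c ^ 2 := by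
        rw [mul_comm 2 √x, ← div_div]
        ring
    _ ≤ 4 * √x * harmonic N + N / √x - 4 * N + 9 / 4 := by gcongr

lemma sub_one_add_sq_div_le_mul_log {r : ℝ} (hr : 1 ≤ r) :
    r - 1 + (r - 1) ^ 2 / (r + 1) ≤ r * log r := by
  have hlog : 2 * (r - 1) / (r + 1) ≤ log r := by
    convert le_log_one_add_of_nonneg (sub_nonneg.2 hr) using 2 <;> ring
  calc r - 1 + (r - 1) ^ 2 / (r + 1) = r * (2 * (r - 1) / (r + 1)) := by field_simp; ring
    _ ≤ r * log r := by gcongr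

lemma two_mul_add_inv_sub_le {r : ℝ} (hr : 1 ≤ r) :
    2 * r + r⁻¹ - 4 * ((r - 1) ^ 2 / (r + 1)) ≤ 7 / 2 := by
  have hdiff : 7 / 2 - (2 * r + r⁻¹ - 4 * ((r - 1) ^ 2 / (r + 1))) =
      ((r - 1) * (2 * (r - 9 / 8) ^ 2 - 17 / 32) + 1) / (r * (r + 1)) := by
    field_simp
    ring
  have hnonneg : 0 ≤ ((r - 1) * (2 * (r - 9 / 8) ^ 2 - 17 / 32) + 1) / (r * (r + 1)) := by
    have : 0 ≤ (r - 1) * (2 * (r - 9 / 8) ^ 2 - 17 / 32) + 1 := by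
      nlinarith [mul_nonneg (sub_nonneg.2 hr) (sq_nonneg (r - 3 / 2))]
    positivity
  linarith

lemma four_mul_mul_harmonic_le {u : ℝ} {N : ℕ} (hN : 1 ≤ N) (hNu : (N : ℝ) ≤ u) :
    4 * u * harmonic N + N / u - 4 * N ≤
      4 * u * log u - 4 * (1 - eulerMascheroniConstant) * u + 7 / 2 := by
  have hN' : (1 : ℝ) ≤ N := by exact_mod_cast hN
  have hN_pos : (0 : ℝ) < N := by linarith
  obtain ⟨r, rfl⟩ : ∃ r, u = N * r := ⟨u / N, by field_simp⟩
  have hr : 1 ≤ r := le_of_mul_le_mul_left (by simpa using hNu) hN_pos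
  have hr_pos : 0 < r := by linarith
  have hharmonic : 4 * (N * r) * (harmonic N : ℝ) ≤
      4 * (N * r) * (log N + eulerMascheroniConstant + 1 / (2 * N)) := by
    gcongr
    exact harmonic_le_log_add_eulerMascheroniConstant hN
  have hlog : N * (r - 1) + (r - 1) ^ 2 / (r + 1) ≤ N * (r * log r) :=
    calc N * (r - 1) + (r - 1) ^ 2 / (r + 1)
        ≤ N * (r - 1) + N * ((r - 1) ^ 2 / (r + 1)) := by
          gcongr
          exact le_mul_of_one_le_left (by positivity) hN'
      _ ≤ N * (r * log r) := by
          rw [← mul_add]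
          gcongr
          exact sub_one_add_sq_div_le_mul_log hr
  have hdiv : (N : ℝ) / (N * r) = r⁻¹ := by field_simp
  have hexpand : 4 * (N * r) * (log N + eulerMascheroniConstant + 1 / (2 * N)) =
      4 * (N * r) * log N + 4 * (N * r) * eulerMascheroniConstant + 2 * r := by
    field_simp
    ring
  rw [hdiv, log_mul hN_pos.ne' hr_pos.ne']
  linarith [two_mul_add_inv_sub_le hr]

theorem divisor_sum_sqrt_bound_general {x : ℝ} (hx : 1 ≤ x) :
    ∑ n ∈ Icc 1 ⌊x⌋₊, (#n.divisors : ℝ) / √n ≤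
      2 * √x * log x - 4 * (1 - eulerMascheroniConstant) * √x + 23 / 4 := by
  set N := Nat.sqrt ⌊x⌋₊
  have hNx : N * N ≤ ⌊x⌋₊ := Nat.sqrt_le _
  have hxN : ⌊x⌋₊ < (N + 1) * (N + 1) := Nat.lt_succ_sqrt _
  have hN : 1 ≤ N := Nat.sqrt_pos.2 (Nat.floor_pos.2 hx)
  have hNsqrt : (N : ℝ) ≤ √x := by
    refine le_sqrt_of_sq_le ?_
    rw [sq]
    exact_mod_cast (Nat.le_floor_iff (zero_le_one.trans hx)).1 hNx
  have hsqrt := four_mul_mul_harmonic_le hN hNsqrt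
  rw [log_sqrt (zero_le_one.trans hx)] at hsqrt
  linarith [sum_card_divisors_div_sqrt_le_harmonic hN hNx hxN]

theorem divisor_sum_sqrt_bound (x : ℝ) (hx : 2 ≤ x) :
    ∑ n ∈ Finset.Icc 1 ⌊x⌋₊, (n.divisors.card : ℝ) / Real.sqrt n
      ≤ 2 * Real.sqrt x * Real.log x - 1.691 * Real.sqrt x + 2 * Real.log x + 5.846 := by
  nlinarith [divisor_sum_sqrt_bound_general (x := x) (by linarith), sqrt_nonneg x,
    log_nonneg (x := x) (by linarith), eulerMascheroniConstant_lt_d5]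
end

section
/- Let δ > 0 and N ≥ exp(exp(18)). Then ∑_{n > N} d(n)²/n^{2+2δ} ≤ (0.206/N^{1+2δ})·(log³N + 3·log²N + 6·log N + 6). -/
/-!
Since `n ^ (-2δ) ≤ N ^ (-2δ)` for `n > N`, it is enough to bound `∑_{n > N} d(n)² / n²`. As `d` is
submultiplicative, `d(n)² ≤ ∑_{uv = n} d(u) d(v) = d₄(n)`, where `d_k = ζ ^ k` is the `k`-fold
Dirichlet power of the constant function `1`. The tails `T_k(y) = ∑_{n > y} d_k(n) / n²` satisfy
`T_{k+1}(y) = ∑_m T_k(y / m) / m²`. Here the terms with `m > y` contribute `O(1 / y)`, while a bound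
`T_k(z) ≤ z⁻¹ P(log z)` turns the terms with `m ≤ y` into `y⁻¹ ∑_{m ≤ y} P(log (y / m)) / m`, which
is at most `y⁻¹ (P(L) + ∫₀ᴸ P)` with `L = log y`. Hence `T_k(y)` is at most about
`y⁻¹ (L + 5k) ^ (k - 1) / (k - 1)!`, where the shift `5k` absorbs both the summand `P(L)` and the
`O(1 / y)`. For `k = 4` the leading coefficient is `1 / 6 < 0.206`.
-/

open ArithmeticFunction
open scoped ArithmeticFunction.sigma ArithmeticFunction.zeta ENNReal Nat

/-- The tail `∑_{n > y} f(n) / n²`. It takes values in `ℝ≥0∞`, so that the sums can be rearranged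
freely and no summability has to be tracked. -/
noncomputable def invSqTail (f : ArithmeticFunction ℕ) (y : ℝ) : ℝ≥0∞ :=
  ∑' n : ℕ, if y < n then ENNReal.ofReal (f n / (n : ℝ) ^ 2) else 0

lemma invSqTail_mono {f g : ArithmeticFunction ℕ} (hfg : ∀ n, f n ≤ g n) (y : ℝ) :
    invSqTail f y ≤ invSqTail g y := by
  refine ENNReal.tsum_le_tsum fun n ↦ ?_
  split_ifs
  · have := hfg n
    gcongr
  · rfl

lemma tsum_dirichlet_mul (f g : ArithmeticFunction ℕ) (w : ℕ → ℝ≥0∞) :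
    ∑' n, ((f * g) n : ℝ≥0∞) * w n = ∑' m, ∑' k, (f m : ℝ≥0∞) * g k * w (m * k) := by
  have tsum_eq_tsum_pnat (h : ℕ → ℝ≥0∞) (h0 : h 0 = 0) : ∑' n, h n = ∑' n : ℕ+, h n := by
    rw [tsum_pnat_eq_tsum_succ, tsum_eq_zero_add' ENNReal.summable, h0, zero_add]
  rw [tsum_eq_tsum_pnat _ (by simp), tsum_eq_tsum_pnat _ (by simp)]
  simp_rw [fun m : ℕ+ ↦ tsum_eq_tsum_pnat (fun k ↦ (f m : ℝ≥0∞) * g k * w (m * k)) (by simp)]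
  rw [← ENNReal.tsum_prod (f := fun m k : ℕ+ ↦ (f m : ℝ≥0∞) * g k * w (m * k)),
    ← sigmaAntidiagonalEquivProd.tsum_eq, ENNReal.tsum_sigma']
  refine tsum_congr fun n ↦ ?_
  rw [mul_apply, Nat.cast_sum, Finset.sum_mul, tsum_fintype, ← Finset.sum_coe_sort]
  refine Finset.sum_congr rfl fun x _ ↦ ?_
  simp [sigmaAntidiagonalEquivProd, divisorsAntidiagonalFactors,
    (Nat.mem_divisorsAntidiagonal.1 x.2).1]

lemma invSqTail_mul (f g : ArithmeticFunction ℕ) (y : ℝ) :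
    invSqTail (f * g) y =
      ∑' m : ℕ, ENNReal.ofReal (f m / (m : ℝ) ^ 2) * invSqTail g (y / m) := by
  have hw (h : ArithmeticFunction ℕ) (n : ℕ) (z : ℝ) :
      (if z < n then ENNReal.ofReal (h n / (n : ℝ) ^ 2) else 0) =
        (h n : ℝ≥0∞) * if z < n then ENNReal.ofReal (1 / (n : ℝ) ^ 2) else 0 := by
    rw [mul_ite, mul_zero, ← ENNReal.ofReal_natCast, ← ENNReal.ofReal_mul (by positivity),
      mul_one_div]
  simp only [invSqTail, hw, tsum_dirichlet_mul, ← ENNReal.tsum_mul_left]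
  refine tsum_congr fun m ↦ tsum_congr fun k ↦ ?_
  rcases m.eq_zero_or_pos with rfl | hm
  · simp
  · have hm' : (0 : ℝ) < m := by exact_mod_cast hm
    simp only [div_lt_iff₀' hm', Nat.cast_mul, mul_ite, mul_zero]
    split_ifs
    · rw [← ENNReal.ofReal_natCast (f m), ← ENNReal.ofReal_natCast (g k),
        ← ENNReal.ofReal_mul (by positivity), ← ENNReal.ofReal_mul (by positivity),
        ← ENNReal.ofReal_mul (by positivity), ← ENNReal.ofReal_mul (by positivity)]
      congr 1
      field_simp
    · rfl

lemma sigma_zero_mul_le (m k : ℕ) : σ 0 (m * k) ≤ σ 0 m * σ 0 k := by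
  simp only [sigma_zero_apply, Nat.divisors_mul]
  exact Finset.card_mul_le

lemma zeta_mul_zeta_eq_sigma_zero : ζ * ζ = σ 0 := by
  rw [← zeta_mul_pow_eq_sigma, pow_zero_eq_zeta]

lemma sigma_zero_sq_le_zeta_pow_four (n : ℕ) : σ 0 n ^ 2 ≤ (ζ ^ 4) n := by
  have card_antidiagonal : n.divisorsAntidiagonal.card = σ 0 n := by
    rw [sigma_zero_apply, ← Nat.map_div_right_divisors, Finset.card_map]
  calc σ 0 n ^ 2 = ∑ _x ∈ n.divisorsAntidiagonal, σ 0 n := by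
        rw [Finset.sum_const, card_antidiagonal, smul_eq_mul, sq]
    _ ≤ ∑ x ∈ n.divisorsAntidiagonal, σ 0 x.1 * σ 0 x.2 := by
        refine Finset.sum_le_sum fun x hx ↦ ?_
        rw [← (Nat.mem_divisorsAntidiagonal.1 hx).1]
        exact sigma_zero_mul_le _ _
    _ = (ζ ^ 4) n := by
        rw [← mul_apply, ← zeta_mul_zeta_eq_sigma_zero, ← sq, ← sq, ← pow_mul]

lemma invSqTail_zeta_le_floor (y : ℝ) :
    invSqTail ζ y ≤
      ENNReal.ofReal (1 / ((⌊y⌋₊ : ℝ) + 1) ^ 2 + 1 / ((⌊y⌋₊ : ℝ) + 1)) := by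
  set K := ⌊y⌋₊
  have term_eq (n : ℕ) : (if y < n then ENNReal.ofReal ((ζ n : ℕ) / (n : ℝ) ^ 2) else 0) =
      ENNReal.ofReal (if K < n then ((n : ℝ) ^ 2)⁻¹ else 0) := by
    rcases eq_or_ne n 0 with rfl | hn
    · simp
    · simp only [K, Nat.floor_lt' hn, zeta_apply_ne hn, Nat.cast_one, one_div]
      split_ifs <;> simp
  simp only [invSqTail, term_eq]
  refine ENNReal.tsum_le_of_sum_range_le fun M ↦ ?_
  rw [← ENNReal.ofReal_sum_of_nonneg (fun n _ ↦ by positivity), ← Finset.sum_filter]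
  gcongr
  calc ∑ n ∈ Finset.range M with K < n, ((n : ℝ) ^ 2)⁻¹
      ≤ ∑ n ∈ Finset.Ioc K (K + 1 + M), ((n : ℝ) ^ 2)⁻¹ := by
        refine Finset.sum_le_sum_of_subset_of_nonneg (fun n hn ↦ ?_) fun n _ _ ↦ by positivity
        simp only [Finset.mem_filter, Finset.mem_range, Finset.mem_Ioc] at hn ⊢
        lia
    _ = (((K + 1 : ℕ) : ℝ) ^ 2)⁻¹ + ∑ n ∈ Finset.Ioc (K + 1) (K + 1 + M), ((n : ℝ) ^ 2)⁻¹ := by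
        rw [← Finset.sum_Ioc_consecutive _ K.le_succ (by lia : K + 1 ≤ K + 1 + M)]
        simp
    _ ≤ (((K + 1 : ℕ) : ℝ) ^ 2)⁻¹ + ((K + 1 : ℕ) : ℝ)⁻¹ := by
        have := sum_Ioc_inv_sq_le_sub (α := ℝ) K.succ_ne_zero (Nat.le_add_right (K + 1) M)
        have : 0 ≤ ((K + 1 + M : ℕ) : ℝ)⁻¹ := by positivity
        gcongr
        linarith
    _ = _ := by push_cast; simp only [one_div]

lemma invSqTail_zeta_le {y : ℝ} (hy : 0 < y) :
    invSqTail ζ y ≤ ENNReal.ofReal (y⁻¹ * (1 + y⁻¹)) := by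
  refine (invSqTail_zeta_le_floor y).trans (ENNReal.ofReal_le_ofReal ?_)
  have hfloor : y ≤ ⌊y⌋₊ + 1 := (Nat.lt_floor_add_one y).le
  calc 1 / ((⌊y⌋₊ : ℝ) + 1) ^ 2 + 1 / ((⌊y⌋₊ : ℝ) + 1) ≤ 1 / y ^ 2 + 1 / y := by gcongr
    _ = y⁻¹ * (1 + y⁻¹) := by ring

lemma invSqTail_zeta_le_two (y : ℝ) : invSqTail ζ y ≤ ENNReal.ofReal 2 := by
  refine (invSqTail_zeta_le_floor y).trans (ENNReal.ofReal_le_ofReal ?_)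
  have hfloor : (1 : ℝ) ≤ ⌊y⌋₊ + 1 := by simp
  calc 1 / ((⌊y⌋₊ : ℝ) + 1) ^ 2 + 1 / ((⌊y⌋₊ : ℝ) + 1) ≤ 1 / 1 ^ 2 + 1 / 1 := by gcongr
    _ = 2 := by norm_num

lemma invSqTail_zeta_pow_le_two_pow (k : ℕ) (y : ℝ) :
    invSqTail (ζ ^ (k + 1)) y ≤ ENNReal.ofReal (2 ^ (k + 1)) := by
  induction k generalizing y with
  | zero => simpa using invSqTail_zeta_le_two y
  | succ k ih =>
    calc invSqTail (ζ ^ (k + 2)) y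
        = ∑' m : ℕ, ENNReal.ofReal (ζ m / (m : ℝ) ^ 2) * invSqTail (ζ ^ (k + 1)) (y / m) := by
          rw [pow_succ' ζ, invSqTail_mul]
      _ ≤ ∑' m : ℕ, ENNReal.ofReal (ζ m / (m : ℝ) ^ 2) * ENNReal.ofReal (2 ^ (k + 1)) := by
          gcongr
          exact ih _
      _ = invSqTail ζ 0 * ENNReal.ofReal (2 ^ (k + 1)) := by
          rw [ENNReal.tsum_mul_right]
          congr 1
          refine tsum_congr fun m ↦ ?_
          rcases m.eq_zero_or_pos with rfl | hm
          · simp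
          · rw [if_pos (by exact_mod_cast hm)]
      _ ≤ ENNReal.ofReal 2 * ENNReal.ofReal (2 ^ (k + 1)) := by
          gcongr
          exact invSqTail_zeta_le_two 0
      _ = ENNReal.ofReal (2 ^ (k + 2)) := by
          rw [← ENNReal.ofReal_mul zero_le_two, ← pow_succ']

lemma one_le_div_of_mem_Icc_floor {y : ℝ} {m : ℕ} (hm : m ∈ Finset.Icc 1 ⌊y⌋₊) : 1 ≤ y / m := by
  obtain ⟨hm1, hmy⟩ := Finset.mem_Icc.1 hm
  have hm0 : (0 : ℝ) < m := by exact_mod_cast hm1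
  exact (one_le_div hm0).2 ((Nat.le_floor_iff' (Nat.one_le_iff_ne_zero.1 hm1)).1 hmy)

lemma invSqTail_zeta_mul_le {g : ArithmeticFunction ℕ} {B : ℝ → ℝ} {Z : ℝ} (hZ : 0 ≤ Z)
    (hB : ∀ z, 1 ≤ z → 0 ≤ B z) (hgZ : ∀ z, invSqTail g z ≤ ENNReal.ofReal Z)
    (hgB : ∀ z, 1 ≤ z → invSqTail g z ≤ ENNReal.ofReal (B z)) {y : ℝ} (hy : 0 < y) :
    invSqTail (ζ * g) y ≤ ENNReal.ofReal
      (∑ m ∈ Finset.Icc 1 ⌊y⌋₊, B (y / m) / (m : ℝ) ^ 2 + y⁻¹ * (1 + y⁻¹) * Z) := by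
  have term_le (m : ℕ) : ENNReal.ofReal (ζ m / (m : ℝ) ^ 2) * invSqTail g (y / m) ≤
      (if m ∈ Finset.Icc 1 ⌊y⌋₊ then ENNReal.ofReal (B (y / m) / (m : ℝ) ^ 2) else 0) +
        (if y < m then ENNReal.ofReal (ζ m / (m : ℝ) ^ 2) else 0) * ENNReal.ofReal Z := by
    rcases eq_or_ne m 0 with rfl | hm0
    · simp
    rcases lt_or_ge y m with hym | hmy
    · rw [if_pos hym]
      exact (mul_le_mul_right (hgZ _) _).trans le_add_self
    · have hm : m ∈ Finset.Icc 1 ⌊y⌋₊ :=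
        Finset.mem_Icc.2 ⟨Nat.one_le_iff_ne_zero.2 hm0, Nat.le_floor hmy⟩
      rw [if_pos hm, zeta_apply_ne hm0, Nat.cast_one]
      refine le_add_right ((mul_le_mul_right (hgB _ (one_le_div_of_mem_Icc_floor hm)) _).trans ?_)
      rw [← ENNReal.ofReal_mul (by positivity), one_div_mul_eq_div]
  have main_nonneg : ∀ m ∈ Finset.Icc 1 ⌊y⌋₊, 0 ≤ B (y / m) / (m : ℝ) ^ 2 := fun m hm ↦
    div_nonneg (hB _ (one_le_div_of_mem_Icc_floor hm)) (by positivity)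
  calc invSqTail (ζ * g) y
      = ∑' m : ℕ, ENNReal.ofReal (ζ m / (m : ℝ) ^ 2) * invSqTail g (y / m) := invSqTail_mul ζ g y
    _ ≤ _ := ENNReal.tsum_le_tsum term_le
    _ = ENNReal.ofReal (∑ m ∈ Finset.Icc 1 ⌊y⌋₊, B (y / m) / (m : ℝ) ^ 2) +
          invSqTail ζ y * ENNReal.ofReal Z := by
        rw [ENNReal.tsum_add, ENNReal.tsum_mul_right, invSqTail,
          tsum_eq_sum (s := Finset.Icc 1 ⌊y⌋₊) fun m hm ↦ if_neg hm,
          Finset.sum_congr rfl fun m hm ↦ if_pos hm, ENNReal.ofReal_sum_of_nonneg main_nonneg]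
    _ ≤ ENNReal.ofReal (∑ m ∈ Finset.Icc 1 ⌊y⌋₊, B (y / m) / (m : ℝ) ^ 2) +
          ENNReal.ofReal (y⁻¹ * (1 + y⁻¹)) * ENNReal.ofReal Z := by
        gcongr
        exact invSqTail_zeta_le hy
    _ = _ := by
        rw [← ENNReal.ofReal_mul (by positivity),
          ← ENNReal.ofReal_add (Finset.sum_nonneg main_nonneg) (by positivity)]

lemma inv_add_one_le_log_sub_log {x : ℝ} (hx : 0 < x) :
    (x + 1)⁻¹ ≤ Real.log (x + 1) - Real.log x := by
  have hx1 : 0 < x + 1 := by linarith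
  calc (x + 1)⁻¹ = 1 - ((x + 1) / x)⁻¹ := by field_simp; ring
    _ ≤ Real.log ((x + 1) / x) := Real.one_sub_inv_le_log_of_pos (by positivity)
    _ = Real.log (x + 1) - Real.log x := Real.log_div hx1.ne' hx.ne'

lemma sum_log_div_div_le {f F : ℝ → ℝ} (hf : ∀ u, 0 ≤ u → 0 ≤ f u)
    (hF : ∀ u v, 0 ≤ u → u ≤ v → (v - u) * f u ≤ F v - F u)
    {M : ℕ} (hM : 1 ≤ M) {y : ℝ} (hMy : M ≤ y) :
    ∑ m ∈ Finset.Icc 1 M, f (Real.log (y / m)) / m ≤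
      f (Real.log y) + (F (Real.log y) - F (Real.log (y / M))) := by
  induction M, hM using Nat.le_induction with
  | base => simp
  | succ M hM ih =>
    have hM0 : (0 : ℝ) < M := by exact_mod_cast hM
    push_cast at hMy
    have hy : 0 < y := by linarith
    have hlog_nonneg : 0 ≤ Real.log (y / (M + 1)) :=
      Real.log_nonneg ((one_le_div (by positivity)).2 hMy)
    have hgap : ((M : ℝ) + 1)⁻¹ ≤ Real.log (y / M) - Real.log (y / (M + 1)) := by
      rw [Real.log_div hy.ne' hM0.ne', Real.log_div hy.ne' (by positivity)]
      linarith [inv_add_one_le_log_sub_log hM0]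
    have hlog_le : Real.log (y / (M + 1)) ≤ Real.log (y / M) := by
      have : 0 < ((M : ℝ) + 1)⁻¹ := by positivity
      linarith
    have hterm : f (Real.log (y / (M + 1))) / (M + 1) ≤
        F (Real.log (y / M)) - F (Real.log (y / (M + 1))) :=
      calc f (Real.log (y / (M + 1))) / (M + 1)
          = (M + 1 : ℝ)⁻¹ * f (Real.log (y / (M + 1))) := by ring
        _ ≤ (Real.log (y / M) - Real.log (y / (M + 1))) * f (Real.log (y / (M + 1))) := by
            gcongr
            exact hf _ hlog_nonneg
        _ ≤ _ := hF _ _ hlog_nonneg hlog_le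
    rw [Finset.sum_Icc_succ_top (by lia)]
    push_cast
    linarith [ih (by linarith)]

lemma sub_mul_pow_div_factorial_le {u v : ℝ} (hu : 0 ≤ u) (huv : u ≤ v) (k : ℕ) :
    (v - u) * (u ^ k / k !) ≤ v ^ (k + 1) / (k + 1)! - u ^ (k + 1) / (k + 1)! := by
  have hbernoulli : u ^ (k + 1) + (k + 1 : ℕ) * u ^ k * (v - u) ≤ v ^ (k + 1) := by
    simpa using pow_add_mul_le_add_pow hu (by linarith : 0 ≤ 2 * u + (v - u)) (k + 1)
  have hfact : ((k + 1)! : ℝ) = (k + 1 : ℕ) * k ! := by exact_mod_cast k.factorial_succ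
  rw [← sub_div, le_div_iff₀ (by positivity), hfact]
  calc (v - u) * (u ^ k / k !) * ((k + 1 : ℕ) * k !) = (k + 1 : ℕ) * u ^ k * (v - u) := by
        field_simp
    _ ≤ v ^ (k + 1) - u ^ (k + 1) := by linarith

lemma one_add_two_mul_two_pow_le {n : ℕ} (hn : 1 ≤ n) :
    1 + 2 * 2 ^ n ≤ (5 * n : ℝ) ^ n / n ! := by
  have hfive : (1 : ℝ) + 2 * 2 ^ n ≤ 5 ^ n := by
    induction n, hn using Nat.le_induction with
    | base => norm_num
    | succ n _ ih => rw [pow_succ, pow_succ]; linarith [pow_pos (zero_lt_two (α := ℝ)) n]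
  have hfact : (n ! : ℝ) ≤ (n : ℝ) ^ n := by exact_mod_cast n.factorial_le_pow
  rw [le_div_iff₀ (by positivity), mul_pow]
  gcongr

lemma sum_inv_div_mul_log_add_pow_le {c y : ℝ} (hc : 0 ≤ c) (hy : 1 ≤ y) (k : ℕ) :
    ∑ m ∈ Finset.Icc 1 ⌊y⌋₊,
        (y / m)⁻¹ * ((Real.log (y / m) + c) ^ k / k ! + (y / m)⁻¹) / (m : ℝ) ^ 2 ≤
      y⁻¹ * ((Real.log y + c) ^ k / k ! +
        ((Real.log y + c) ^ (k + 1) / (k + 1)! - c ^ (k + 1) / (k + 1)!) + 1) := by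
  have hy0 : 0 < y := by linarith
  set M := ⌊y⌋₊
  have hM : 1 ≤ M := (Nat.one_le_floor_iff y).2 hy
  have hM0 : (0 : ℝ) < M := by exact_mod_cast hM
  have hMy : (M : ℝ) ≤ y := Nat.floor_le hy0.le
  have hlog_nonneg : 0 ≤ Real.log (y / M) := Real.log_nonneg ((one_le_div hM0).2 hMy)
  have hlog := sum_log_div_div_le (f := fun u ↦ (u + c) ^ k / k !)
    (F := fun u ↦ (u + c) ^ (k + 1) / (k + 1)!) (fun u hu ↦ by positivity)
    (fun u v hu huv ↦ by
      simpa using sub_mul_pow_div_factorial_le (add_nonneg hu hc) (add_le_add_left huv c) k) hM hMy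
  calc _ = ∑ m ∈ Finset.Icc 1 M, y⁻¹ * ((Real.log (y / m) + c) ^ k / k ! / m + y⁻¹) := by
        refine Finset.sum_congr rfl fun m hm ↦ ?_
        have hm0 : (0 : ℝ) < m := by exact_mod_cast (Finset.mem_Icc.1 hm).1
        field_simp
    _ = y⁻¹ * (∑ m ∈ Finset.Icc 1 M, (Real.log (y / m) + c) ^ k / k ! / m + M / y) := by
        simp only [← Finset.mul_sum, Finset.sum_add_distrib, Finset.sum_const, Nat.card_Icc,
          Nat.add_sub_cancel, nsmul_eq_mul, div_eq_mul_inv]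
    _ ≤ _ := by
        gcongr
        · refine hlog.trans ?_
          gcongr
          linarith
        · exact div_le_one_of_le₀ hMy hy0.le

lemma pow_div_factorial_step {x c : ℝ} {k : ℕ} (hx : 0 ≤ x) (hc : c = 5 * (k + 1)) :
    x ^ k / k ! + (x ^ (k + 1) / (k + 1)! - c ^ (k + 1) / (k + 1)!) + (1 + 2 * 2 ^ (k + 1)) ≤
      (x + 5) ^ (k + 1) / (k + 1)! := by
  have hstep : x ^ k / k ! ≤ (x + 1) ^ (k + 1) / (k + 1)! - x ^ (k + 1) / (k + 1)! := by
    simpa using sub_mul_pow_div_factorial_le hx (le_add_of_nonneg_right zero_le_one) k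
  have herror : 1 + 2 * 2 ^ (k + 1) ≤ c ^ (k + 1) / (k + 1)! := by
    simpa [hc] using one_add_two_mul_two_pow_le k.succ_pos
  calc _ ≤ (x + 1) ^ (k + 1) / (k + 1)! := by linarith
    _ ≤ (x + 5) ^ (k + 1) / (k + 1)! := by gcongr; norm_num

lemma invSqTail_zeta_pow_le (k : ℕ) {y : ℝ} (hy : 1 ≤ y) :
    invSqTail (ζ ^ (k + 1)) y ≤
      ENNReal.ofReal (y⁻¹ * ((Real.log y + 5 * (k + 1)) ^ k / k ! + y⁻¹)) := by
  induction k generalizing y with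
  | zero => simpa using invSqTail_zeta_le (by linarith)
  | succ k ih =>
    have hy0 : 0 < y := by linarith
    have hlog_nonneg : 0 ≤ Real.log y := Real.log_nonneg hy
    have hinv : y⁻¹ ≤ 1 := inv_le_one_of_one_le₀ hy
    have hinv_nonneg : 0 ≤ y⁻¹ := by positivity
    set c : ℝ := 5 * (k + 1) with hc_def
    have hc : 0 ≤ c := by positivity
    set x := Real.log y + c with hx_def
    have hsplit := invSqTail_zeta_mul_le (g := ζ ^ (k + 1)) (Z := 2 ^ (k + 1))
      (B := fun z ↦ z⁻¹ * ((Real.log z + c) ^ k / k ! + z⁻¹)) (by positivity)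
      (fun z hz ↦ by have := Real.log_nonneg hz; positivity)
      (invSqTail_zeta_pow_le_two_pow k) (fun z hz ↦ ih hz) hy0
    rw [pow_succ' ζ]
    refine hsplit.trans (ENNReal.ofReal_le_ofReal ?_)
    calc _ ≤ y⁻¹ * (x ^ k / k ! + (x ^ (k + 1) / (k + 1)! - c ^ (k + 1) / (k + 1)!) + 1) +
          y⁻¹ * (1 + 1) * 2 ^ (k + 1) := by
          gcongr
          exact sum_inv_div_mul_log_add_pow_le hc hy k
      _ = y⁻¹ * (x ^ k / k ! + (x ^ (k + 1) / (k + 1)! - c ^ (k + 1) / (k + 1)!) +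
            (1 + 2 * 2 ^ (k + 1))) := by ring
      _ ≤ y⁻¹ * ((x + 5) ^ (k + 1) / (k + 1)!) := by
          gcongr
          exact pow_div_factorial_step (by positivity) hc_def
      _ = y⁻¹ * ((Real.log y + 5 * ((k + 1 : ℕ) + 1)) ^ (k + 1) / (k + 1)!) := by
          rw [hx_def, hc_def]
          push_cast
          ring
      _ ≤ _ := by
          gcongr
          exact le_add_of_nonneg_right hinv_nonneg

lemma tsum_div_rpow_le_of_invSqTail_le {f : ArithmeticFunction ℕ} {s y B : ℝ} (hs : 2 ≤ s)
    (hy : 0 < y) (hB : 0 ≤ B) (hf : invSqTail f y ≤ ENNReal.ofReal B) :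
    ∑' n : {n : ℕ // y < (n : ℝ)}, (f n : ℝ) / (n : ℝ) ^ s ≤ y ^ (2 - s) * B := by
  have hterm_le (n : {n : ℕ // y < (n : ℝ)}) :
      (f n : ℝ) / (n : ℝ) ^ s ≤ y ^ (2 - s) * (f n / (n : ℝ) ^ 2) := by
    have hn : 0 < (n : ℝ) := hy.trans n.2
    calc (f n : ℝ) / (n : ℝ) ^ s = (n : ℝ) ^ (2 - s) * (f n / (n : ℝ) ^ 2) := by
          rw [Real.rpow_sub hn, Real.rpow_two]
          field_simp
      _ ≤ y ^ (2 - s) * (f n / (n : ℝ) ^ 2) := by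
          gcongr ?_ * _
          exact Real.rpow_le_rpow_of_nonpos hy n.2.le (by linarith)
  refine tsum_le_of_sum_le' (by positivity) fun S ↦ ?_
  refine (Finset.sum_le_sum fun n _ ↦ hterm_le n).trans ?_
  rw [← Finset.mul_sum]
  gcongr
  rw [← ENNReal.ofReal_le_ofReal_iff hB, ENNReal.ofReal_sum_of_nonneg fun n _ ↦ by positivity]
  calc ∑ n ∈ S, ENNReal.ofReal ((f n : ℝ) / (n : ℝ) ^ 2)
      ≤ ∑' n : {n : ℕ // y < (n : ℝ)}, ENNReal.ofReal ((f n : ℝ) / (n : ℝ) ^ 2) :=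
        ENNReal.sum_le_tsum S
    _ = invSqTail f y :=
        tsum_subtype {n : ℕ | y < n} fun n : ℕ ↦ ENNReal.ofReal ((f n : ℝ) / (n : ℝ) ^ 2)
    _ ≤ ENNReal.ofReal B := hf

lemma tsum_sq_card_divisors_div_rpow_le {s y : ℝ} (hs : 2 ≤ s) (hy : 1 ≤ y) :
    ∑' n : {n : ℕ // y < (n : ℝ)}, ((n : ℕ).divisors.card : ℝ) ^ 2 / (n : ℕ) ^ s ≤
      y ^ (1 - s) * ((Real.log y + 20) ^ 3 / 6 + 1) := by
  have hy0 : 0 < y := by linarith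
  have hL := Real.log_nonneg hy
  have htail : invSqTail ((σ 0).ppow 2) y ≤
      ENNReal.ofReal (y⁻¹ * ((Real.log y + 20) ^ 3 / 6 + y⁻¹)) := by
    refine (invSqTail_mono (fun n ↦ ?_) y).trans ((invSqTail_zeta_pow_le 3 hy).trans_eq ?_)
    · rw [ppow_apply two_pos]
      exact sigma_zero_sq_le_zeta_pow_four n
    · norm_num [Nat.factorial]
  have hinv : y⁻¹ ≤ 1 := inv_le_one_of_one_le₀ hy
  calc _ = ∑' n : {n : ℕ // y < (n : ℝ)}, ((σ 0).ppow 2 n : ℝ) / (n : ℝ) ^ s := by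
        simp only [ppow_apply two_pos, sigma_zero_apply, Nat.cast_pow]
    _ ≤ y ^ (2 - s) * (y⁻¹ * ((Real.log y + 20) ^ 3 / 6 + y⁻¹)) :=
        tsum_div_rpow_le_of_invSqTail_le hs hy0 (by positivity) htail
    _ = y ^ (1 - s) * ((Real.log y + 20) ^ 3 / 6 + y⁻¹) := by
        rw [← mul_assoc, ← Real.rpow_neg_one, ← Real.rpow_add hy0]
        ring_nf
    _ ≤ y ^ (1 - s) * ((Real.log y + 20) ^ 3 / 6 + 1) := by gcongr

lemma cube_add_div_six_le {L : ℝ} (hL : 300 ≤ L) :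
    (L + 20) ^ 3 / 6 + 1 ≤ 0.206 * (L ^ 3 + 3 * L ^ 2 + 6 * L + 6) := by
  have hsq : 300 * L ≤ L ^ 2 := by nlinarith
  have hcube : 300 * L ^ 2 ≤ L ^ 3 := by nlinarith [sq_nonneg L]
  linarith

theorem divisor_sq_tail_bound_general {δ N : ℝ} (hδ : 0 ≤ δ) (hN : Real.exp 300 ≤ N) :
    ∑' n : {n : ℕ // N < (n : ℝ)}, ((n : ℕ).divisors.card : ℝ) ^ 2 / (n : ℕ) ^ (2 + 2 * δ)
      ≤ 0.206 / N ^ (1 + 2 * δ) *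
        (Real.log N ^ 3 + 3 * Real.log N ^ 2 + 6 * Real.log N + 6) := by
  have hN1 : 1 ≤ N := (Real.one_le_exp (by norm_num)).trans hN
  have hN0 : 0 < N := by linarith
  have hlog : 300 ≤ Real.log N := (Real.le_log_iff_exp_le hN0).2 hN
  calc _ ≤ N ^ (1 - (2 + 2 * δ)) * ((Real.log N + 20) ^ 3 / 6 + 1) :=
        tsum_sq_card_divisors_div_rpow_le (by linarith) hN1
    _ ≤ N ^ (1 - (2 + 2 * δ)) *
          (0.206 * (Real.log N ^ 3 + 3 * Real.log N ^ 2 + 6 * Real.log N + 6)) := by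
        gcongr
        exact cube_add_div_six_le hlog
    _ = _ := by
        rw [show 1 - (2 + 2 * δ) = -(1 + 2 * δ) by ring, Real.rpow_neg hN0.le]
        ring

lemma three_hundred_le_exp_eighteen : 300 ≤ Real.exp 18 :=
  le_trans (by norm_num [Nat.factorial]) (Real.pow_div_factorial_le_exp 18 (by norm_num) 3)

theorem divisor_sq_tail_bound (δ N : ℝ) (hδ : 0 < δ) (hN : Real.exp (Real.exp 18) ≤ N) :
    ∑' n : {n : ℕ // N < (n : ℝ)}, ((n : ℕ).divisors.card : ℝ) ^ 2 / (n : ℕ) ^ (2 + 2 * δ)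
      ≤ 0.206 / N ^ (1 + 2 * δ) *
        (Real.log N ^ 3 + 3 * Real.log N ^ 2 + 6 * Real.log N + 6) :=
  divisor_sq_tail_bound_general hδ.le
    ((Real.exp_le_exp.2 three_hundred_le_exp_eighteen).trans hN)
end
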